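/- For all constants Γ ≥ γ > 0 there is a constant C' > 0 (depending only on γ and Γ) such that for all integers m, d ≥ 2 with γ·d ≤ m ≤ Γ·d, a jittered sampling point set P of N = m^d points in [0,1)^d satisfies E[D*(P)] ≥ C' · √(d·N). -/

import Mathlib

/-!
The witness is an anchored box that is chosen depending on the points. For each direction `i`, push
out by half the side length of a cube that face of the box `[0, 1 - 1/m)^d` which is orthogonal to
`i` if this increases the discrepancy. This decision looks only at the `(m - 1)^(d - 1)` cubes that
touch the facet `p i = 1` of the unit cube and no other facet `p j = 1`. Exactly half of each of
them is added, so the change of the discrepancy is a sum of `(m - 1)^(d - 1)` independent fair signs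
`±1/2`, and by Khintchine's inequality the expectation of its positive part has order
`√((m - 1)^(d - 1))`. The cubes of other directions are not affected by the decision for `i`, so the
gains of the `d` directions add up. The points in all the remaining cubes are independent of the
decisions, so these cubes contribute `0` in expectation, although they depend on the box chosen.
Hence `E[D*(P)]` is at least of order `d √((m - 1)^(d - 1))`, and this is of order `√(d m^d)`
because `(1 - 1/m)^(d - 1)` stays away from `0` when `m` and `d` are of the same order.
-/

open MeasureTheory ProbabilityTheory Real

noncomputable section

/-- The axis-aligned cube `∏_i [x_i/m, x_i/m + 1/m)` of the `m`-grid partition of `[0,1)^d`. -/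
def jitterCube (m d : ℕ) (x : Fin d → Fin m) : Set (Fin d → ℝ) :=
  Set.univ.pi fun i => Set.Ico ((x i : ℝ) / m) ((x i : ℝ) / m + 1 / m)

/-- The distribution of a jittered sampling point configuration: independently, one point
uniformly distributed in each of the `m^d` cubes. -/
def jitterMeasure (m d : ℕ) : Measure ((Fin d → Fin m) → (Fin d → ℝ)) :=
  Measure.pi fun x => ((m : ENNReal) ^ d) • volume.restrict (jitterCube m d x)

open scoped Classical in
/-- Signed (non-normalized) discrepancy `|P ∩ A| - N·λ(A)` with `N = m^d` of a point
configuration `P`. -/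
def jdisc (m d : ℕ) (P : (Fin d → Fin m) → (Fin d → ℝ)) (A : Set (Fin d → ℝ)) : ℝ :=
  ((Finset.univ.filter fun x => P x ∈ A).card : ℝ) - (m : ℝ) ^ d * (volume A).toReal

/-- The anchored box `[0,y) = ∏_i [0, y_i)`. -/
def anchoredBox (d : ℕ) (y : Fin d → ℝ) : Set (Fin d → ℝ) :=
  Set.univ.pi fun i => Set.Ico 0 (y i)

/-- The (non-normalized) star discrepancy `D*(P) = sup_{y ∈ [0,1)^d} |disc([0,y))|`. -/
def starDisc (m d : ℕ) (P : (Fin d → Fin m) → (Fin d → ℝ)) : ℝ :=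
  ⨆ y : {y : Fin d → ℝ // ∀ i, y i ∈ Set.Ico (0 : ℝ) 1}, |jdisc m d P (anchoredBox d y.1)|

/-- The expected star discrepancy of a jittered sampling point set of `m^d` points. -/
def expStarDisc (m d : ℕ) : ℝ :=
  ∫ P, starDisc m d P ∂(jitterMeasure m d)

section Khintchine

variable {Ω ι : Type*} [MeasurableSpace Ω]

lemma one_sub_re_charFun_le {μ : Measure ℝ} [IsProbabilityMeasure μ]
    (hμ : Integrable (fun x => x) μ) (t : ℝ) :
    1 - (charFun μ t).re ≤ |t| * ∫ x, |x| ∂μ := by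
  have hexp : Integrable (fun x : ℝ => Complex.exp (t * x * Complex.I)) μ :=
    .of_bound (by fun_prop) 1 <| .of_forall fun x => by
      rw [← Complex.ofReal_mul, Complex.norm_exp_ofReal_mul_I]
  have hre : (charFun μ t).re = ∫ x, Real.cos (t * x) ∂μ := by
    rw [charFun_apply_real, ← RCLike.re_eq_complex_re, ← integral_re hexp]
    simp only [← Complex.ofReal_mul, RCLike.re_eq_complex_re, Complex.exp_ofReal_mul_I_re]
  have hcos : Integrable (fun x => Real.cos (t * x)) μ :=
    .of_bound (by fun_prop) 1 <| .of_forall fun x => Real.abs_cos_le_one _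
  calc 1 - (charFun μ t).re = ∫ x, (1 - Real.cos (t * x)) ∂μ := by
        rw [integral_sub (integrable_const _) hcos, hre]
        simp
    _ ≤ ∫ x, |t| * |x| ∂μ := by
        refine integral_mono ((integrable_const _).sub hcos) (hμ.abs.const_mul _) fun x => ?_
        have h := Real.abs_cos_sub_cos_le 0 (t * x)
        rw [Real.cos_zero, zero_sub, abs_neg, abs_mul] at h
        exact (le_abs_self _).trans h
    _ = |t| * ∫ x, |x| ∂μ := integral_const_mul _ _

lemma cos_one_div_sqrt_pow_le {n : ℕ} (hn : n ≠ 0) :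
    Real.cos (1 / √n) ^ n ≤ Real.exp (-(2 / π ^ 2)) := by
  have hn1 : (1 : ℝ) ≤ n := by exact_mod_cast Nat.one_le_iff_ne_zero.2 hn
  have h0 : 0 ≤ 1 / √(n : ℝ) := by positivity
  have h1 : 1 / √(n : ℝ) ≤ 1 := div_le_one_of_le₀ (Real.one_le_sqrt.2 hn1) (Real.sqrt_nonneg _)
  have hcos0 : 0 ≤ Real.cos (1 / √n) :=
    Real.cos_nonneg_of_mem_Icc ⟨by linarith [pi_gt_three], by linarith [pi_gt_three]⟩
  have hcos : Real.cos (1 / √n) ≤ Real.exp (-(2 / π ^ 2 * (1 / √n) ^ 2)) := by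
    have hquad : Real.cos (1 / √n) ≤ 1 - 2 / π ^ 2 * (1 / √n) ^ 2 :=
      Real.cos_le_one_sub_mul_cos_sq (by rw [abs_of_nonneg h0]; linarith [pi_gt_three])
    linarith [Real.add_one_le_exp (-(2 / π ^ 2 * (1 / √(n : ℝ)) ^ 2))]
  calc Real.cos (1 / √n) ^ n ≤ Real.exp (-(2 / π ^ 2 * (1 / √n) ^ 2)) ^ n :=
        pow_le_pow_left₀ hcos0 hcos n
    _ = Real.exp (-(2 / π ^ 2)) := by
        rw [← Real.exp_nat_mul, div_pow, Real.sq_sqrt (by linarith)]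
        congr 1
        field_simp

/-- The constant of the `L¹` Khintchine inequality `mul_sqrt_card_le_integral_abs_sum`; it is the
value that the characteristic function argument gives, not the optimal `1 / √2`. -/
def khintchineConst : ℝ := 1 - Real.exp (-(2 / π ^ 2))

lemma khintchineConst_pos : 0 < khintchineConst :=
  sub_pos.2 <| Real.exp_lt_one_iff.2 <| neg_lt_zero.2 <| by positivity

/- `charFun = cos (r * ·)` encodes that each `X i` takes the values `r` and `-r` with probability
`1 / 2`. -/
lemma mul_sqrt_card_le_integral_abs_sum {P : Measure Ω} {X : ι → Ω → ℝ} {s : Finset ι}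
    (hX : iIndepFun (s.restrict X) P) (hint : ∀ i ∈ s, Integrable (X i) P) {r : ℝ} (hr : 0 < r)
    (hφ : ∀ i ∈ s, ∀ t : ℝ, charFun (P.map (X i)) t = Real.cos (r * t)) :
    r * khintchineConst * √s.card ≤ ∫ ω, |∑ i ∈ s, X i ω| ∂P := by
  rcases eq_or_ne s.card 0 with h0 | hs
  · simpa [h0] using integral_nonneg fun ω => abs_nonneg (∑ i ∈ s, X i ω)
  have : IsProbabilityMeasure P := hX.isProbabilityMeasure
  have hsum : Integrable (fun ω => ∑ i ∈ s, X i ω) P := integrable_finsetSum _ hint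
  have : IsProbabilityMeasure (P.map fun ω => ∑ i ∈ s, X i ω) :=
    Measure.isProbabilityMeasure_map hsum.aemeasurable
  have : 0 < √(s.card : ℝ) := by positivity
  set t : ℝ := 1 / (r * √s.card) with ht
  have hre : (charFun (P.map fun ω => ∑ i ∈ s, X i ω) t).re = Real.cos (1 / √s.card) ^ s.card := by
    have hrt : r * t = 1 / √s.card := by rw [ht]; field_simp
    rw [hX.charFun_map_fun_finsetSum_eq_prod fun i hi => (hint i hi).aemeasurable,
      Finset.prod_apply, Finset.prod_congr rfl fun i hi => hφ i hi t, Finset.prod_const, hrt,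
      ← Complex.ofReal_pow, Complex.ofReal_re]
  have hmean : khintchineConst ≤ t * ∫ ω, |∑ i ∈ s, X i ω| ∂P :=
    calc khintchineConst ≤ 1 - (charFun (P.map fun ω => ∑ i ∈ s, X i ω) t).re :=
          hre ▸ sub_le_sub_left (cos_one_div_sqrt_pow_le hs) 1
      _ ≤ |t| * ∫ x, |x| ∂(P.map fun ω => ∑ i ∈ s, X i ω) :=
          one_sub_re_charFun_le
            ((integrable_map_measure (by fun_prop) hsum.aemeasurable).2 hsum) t
      _ = t * ∫ ω, |∑ i ∈ s, X i ω| ∂P := by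
          rw [integral_map hsum.aemeasurable (by fun_prop), abs_of_pos (by positivity)]
  rw [ht, div_mul_eq_mul_div, one_mul, le_div_iff₀ (by positivity)] at hmean
  linarith

end Khintchine

section Independence

variable {Ω α β ι κ E : Type*} [MeasurableSpace Ω] [MeasurableSpace α] [MeasurableSpace β]
  [MeasurableSpace κ] [MeasurableSpace E]

lemma integral_comp_prodMk_eq_zero_of_indepFun {P : Measure Ω} [IsFiniteMeasure P] {X : Ω → α}
    {Y : Ω → β} (hXY : X ⟂ᵢ[P] Y) (hX : AEMeasurable X P) (hY : AEMeasurable Y P) {g : α × β → ℝ}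
    (hg : Integrable g ((P.map X).prod (P.map Y))) (h0 : ∀ a, ∫ b, g (a, b) ∂(P.map Y) = 0) :
    ∫ ω, g (X ω, Y ω) ∂P = 0 := by
  have hmap := hXY.map_prod_eq_prod_map_map hX hY
  rw [← integral_map (hX.prodMk hY) (hmap ▸ hg.aestronglyMeasurable), hmap, integral_prod g hg]
  simp only [h0, integral_zero]

lemma indepFun_eval_of_dependsOn [Fintype ι] {μ : ι → Measure E} [∀ i, IsProbabilityMeasure (μ i)]
    {S : (ι → E) → κ} (hS : Measurable S) {x : ι} (hdep : DependsOn S {x}ᶜ) :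
    S ⟂ᵢ[Measure.pi μ] fun P => P x := by
  classical
  obtain ⟨e⟩ := (μ x).nonempty_of_neZero
  have hind : iIndepFun (fun i (P : ι → E) => P i) (Measure.pi μ) :=
    iIndepFun_pi (X := fun _ p => p) fun _ => aemeasurable_id
  have hrestrict := hind.indepFun_finset {x}ᶜ {x} disjoint_compl_left measurable_pi_apply
  have hfactor : S = (fun r => S (Function.updateFinset (fun _ => e) {x}ᶜ r)) ∘
      fun P (i : ({x}ᶜ : Finset ι)) => P i := by
    ext P
    exact hdep fun i hi => by simp_all [Function.updateFinset]
  rw [hfactor]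
  exact hrestrict.comp (hS.comp measurable_updateFinset)
    (measurable_pi_apply (⟨x, Finset.mem_singleton_self x⟩ : ({x} : Finset ι)))

end Independence

/-- The centred random variable `1_A - μ(A)`: the contribution of a single `μ`-distributed point
to the discrepancy of `A`. -/
def centeredIndicator {E : Type*} [MeasurableSpace E] (μ : Measure E) (A : Set E) (p : E) : ℝ :=
  A.indicator 1 p - μ.real A

/-- The discrepancy of `A` with respect to the points `P x`, `x ∈ T`, only, when `P x` is a sample
of `μ x`. -/
def partialDisc {ι E : Type*} [MeasurableSpace E] (μ : ι → Measure E) (T : Finset ι) (A : Set E)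
    (P : ι → E) : ℝ :=
  ∑ x ∈ T, centeredIndicator (μ x) A (P x)

section CenteredIndicator

variable {E : Type*} [MeasurableSpace E] {μ : Measure E} {A : Set E}

lemma measurable_centeredIndicator (hA : MeasurableSet A) : Measurable (centeredIndicator μ A) :=
  (measurable_one.indicator hA).sub_const _

@[simp]
lemma centeredIndicator_empty (p : E) : centeredIndicator μ ∅ p = 0 := by
  simp [centeredIndicator]

lemma measurable_centeredIndicator_prod [SFinite μ] {κ : Type*} [MeasurableSpace κ] {A : κ → Set E}
    (hA : MeasurableSet {q : κ × E | q.2 ∈ A q.1}) :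
    Measurable fun q : κ × E => centeredIndicator μ (A q.1) q.2 :=
  .sub (measurable_one.indicator hA)
    ((measurable_measure_prodMk_left hA).ennreal_toReal.comp measurable_fst)

variable [IsProbabilityMeasure μ]

lemma abs_centeredIndicator_le_one (p : E) : |centeredIndicator μ A p| ≤ 1 := by
  have h1 : μ.real A ≤ 1 := measureReal_le_one
  have h0 : 0 ≤ μ.real A := measureReal_nonneg
  rw [centeredIndicator, abs_le]
  by_cases hp : p ∈ A <;> simp only [hp, Set.indicator_of_mem, Set.indicator_of_notMem,
    Pi.one_apply, not_false_eq_true] <;> constructor <;> linarith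

lemma integral_centeredIndicator (hA : MeasurableSet A) : ∫ p, centeredIndicator μ A p ∂μ = 0 := by
  unfold centeredIndicator
  rw [integral_sub ((integrable_const 1).indicator hA) (integrable_const _),
    integral_indicator_one hA]
  simp

lemma charFun_map_centeredIndicator (hA : MeasurableSet A) (h : μ.real A = 1 / 2) (t : ℝ) :
    charFun (μ.map (centeredIndicator μ A)) t = Real.cos (1 / 2 * t) := by
  have hmeas := measurable_centeredIndicator (μ := μ) hA
  have hint : Integrable (fun p => Complex.exp (t * centeredIndicator μ A p * Complex.I)) μ :=
    .of_bound (by fun_prop) 1 <| .of_forall fun p => by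
      rw [← Complex.ofReal_mul, Complex.norm_exp_ofReal_mul_I]
  have hcompl : μ.real Aᶜ = 1 / 2 := by rw [probReal_compl_eq_one_sub hA, h]; norm_num
  have hon : Set.EqOn (fun p => Complex.exp (t * centeredIndicator μ A p * Complex.I))
      (fun _ => Complex.exp (1 / 2 * t * Complex.I)) A := fun p hp => by
    have hp' : centeredIndicator μ A p = 1 / 2 := by simp [centeredIndicator, hp, h]; norm_num
    simp only [hp', Complex.ofReal_div, Complex.ofReal_one, Complex.ofReal_ofNat, mul_comm (t : ℂ)]
  have hoff : Set.EqOn (fun p => Complex.exp (t * centeredIndicator μ A p * Complex.I))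
      (fun _ => Complex.exp (-(1 / 2 * t) * Complex.I)) Aᶜ := fun p hp => by
    have hp' : centeredIndicator μ A p = -(1 / 2) := by
      simp [centeredIndicator, Set.notMem_of_mem_compl hp, h]
    simp only [hp', Complex.ofReal_neg, Complex.ofReal_div, Complex.ofReal_one,
      Complex.ofReal_ofNat, mul_comm (t : ℂ), neg_mul]
  rw [charFun_apply_real, integral_map hmeas.aemeasurable (by fun_prop),
    ← integral_add_compl hA hint, setIntegral_congr_fun hA hon, setIntegral_congr_fun hA.compl hoff,
    setIntegral_const, setIntegral_const, h, hcompl, Complex.ofReal_cos, Complex.cos]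
  simp only [Complex.real_smul]
  push_cast
  ring

lemma integrable_centeredIndicator_prod {κ : Type*} [MeasurableSpace κ] {ν : Measure κ}
    [IsFiniteMeasure ν] {A : κ → Set E} (hA : MeasurableSet {q : κ × E | q.2 ∈ A q.1}) :
    Integrable (fun q : κ × E => centeredIndicator μ (A q.1) q.2) (ν.prod μ) :=
  .of_bound (measurable_centeredIndicator_prod hA).aestronglyMeasurable 1
    (.of_forall fun q => abs_centeredIndicator_le_one q.2)

end CenteredIndicator

section PartialDisc

variable {ι κ E : Type*} [MeasurableSpace κ] [MeasurableSpace E] {μ : ι → Measure E}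
  {T : Finset ι} {A : Set E}

lemma measurable_partialDisc (hA : MeasurableSet A) : Measurable (partialDisc μ T A) :=
  Finset.measurable_fun_sum _ fun x _ =>
    (measurable_centeredIndicator hA).comp (measurable_pi_apply x)

lemma dependsOn_partialDisc : DependsOn (partialDisc μ T A) T := fun _ _ h =>
  Finset.sum_congr rfl fun x hx => by rw [h x hx]

lemma partialDisc_biUnion {ι' : Type*} [DecidableEq ι] {s : Finset ι'} {T : ι' → Finset ι}
    (hT : Set.PairwiseDisjoint s T) (P : ι → E) :
    partialDisc μ (s.biUnion T) A P = ∑ i ∈ s, partialDisc μ (T i) A P :=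
  Finset.sum_biUnion hT

variable [Fintype ι]

lemma partialDisc_add_compl [DecidableEq ι] (P : ι → E) :
    partialDisc μ T A P + partialDisc μ Tᶜ A P = partialDisc μ Finset.univ A P :=
  Finset.sum_add_sum_compl T _

variable [∀ x, IsProbabilityMeasure (μ x)]

lemma integrable_centeredIndicator_eval (hA : MeasurableSet A) (x : ι) :
    Integrable (fun P : ι → E => centeredIndicator (μ x) A (P x)) (Measure.pi μ) :=
  .of_bound ((measurable_centeredIndicator hA).comp (measurable_pi_apply x)).aestronglyMeasurable 1
    (.of_forall fun P => abs_centeredIndicator_le_one (P x))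

lemma integrable_partialDisc (hA : MeasurableSet A) :
    Integrable (partialDisc μ T A) (Measure.pi μ) :=
  integrable_finsetSum _ fun x _ => integrable_centeredIndicator_eval hA x

lemma integral_partialDisc (hA : MeasurableSet A) :
    ∫ P, partialDisc μ T A P ∂(Measure.pi μ) = 0 := by
  unfold partialDisc
  rw [integral_finsetSum _ fun x _ => integrable_centeredIndicator_eval hA x]
  refine Finset.sum_eq_zero fun x _ => ?_
  rw [integral_comp_eval (measurable_centeredIndicator hA).aestronglyMeasurable,
    integral_centeredIndicator hA]

lemma mul_sqrt_card_le_integral_abs_partialDisc (hA : MeasurableSet A)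
    (h : ∀ x ∈ T, (μ x).real A = 1 / 2) :
    1 / 2 * khintchineConst * √T.card ≤ ∫ P, |partialDisc μ T A P| ∂(Measure.pi μ) := by
  have hind : iIndepFun (fun x (P : ι → E) => centeredIndicator (μ x) A (P x)) (Measure.pi μ) :=
    iIndepFun_pi fun x => (measurable_centeredIndicator hA).aemeasurable
  refine mul_sqrt_card_le_integral_abs_sum (hind.restrict T)
    (fun x _ => integrable_centeredIndicator_eval hA x) one_half_pos fun x hx t => ?_
  have hlaw : (Measure.pi μ).map (fun P : ι → E => centeredIndicator (μ x) A (P x)) =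
      (μ x).map (centeredIndicator (μ x) A) := by
    rw [← (measurePreserving_eval μ x).map_eq,
      Measure.map_map (measurable_centeredIndicator hA) (measurable_pi_apply x)]
    simp only [(measurePreserving_eval μ x).map_eq]
    rfl
  rw [hlaw, charFun_map_centeredIndicator hA (h x hx)]

lemma mul_sqrt_card_le_integral_posPart_partialDisc (hA : MeasurableSet A)
    (h : ∀ x ∈ T, (μ x).real A = 1 / 2) :
    khintchineConst / 4 * √T.card ≤ ∫ P, (partialDisc μ T A P)⁺ ∂(Measure.pi μ) := by
  have habs := mul_sqrt_card_le_integral_abs_partialDisc hA h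
  rw [integral_abs_eq_two_mul_integral_posPart_sub_integral (integrable_partialDisc hA),
    integral_partialDisc hA] at habs
  linarith

lemma integrable_partialDisc_comp {S : (ι → E) → κ} (hS : Measurable S) {A : κ → Set E}
    (hA : MeasurableSet {q : κ × E | q.2 ∈ A q.1}) :
    Integrable (fun P => partialDisc μ T (A (S P)) P) (Measure.pi μ) :=
  integrable_finsetSum _ fun x _ =>
    .of_bound ((measurable_centeredIndicator_prod hA).comp
      (hS.prodMk (measurable_pi_apply x))).aestronglyMeasurable 1
      (.of_forall fun P => abs_centeredIndicator_le_one (P x))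

/- Conditionally on the points outside `T`, the set is fixed and the points in `T` keep their
distribution. -/
lemma integral_partialDisc_comp_of_dependsOn {S : (ι → E) → κ} (hS : Measurable S)
    (hdep : DependsOn S (T : Set ι)ᶜ) {A : κ → Set E}
    (hA : MeasurableSet {q : κ × E | q.2 ∈ A q.1}) :
    ∫ P, partialDisc μ T (A (S P)) P ∂(Measure.pi μ) = 0 := by
  unfold partialDisc
  rw [integral_finsetSum]
  · refine Finset.sum_eq_zero fun x hx => ?_
    have hlaw : (Measure.pi μ).map (fun P : ι → E => P x) = μ x :=
      (measurePreserving_eval μ x).map_eq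
    have hx' : DependsOn S {x}ᶜ := hdep.mono (Set.compl_subset_compl.2 (by simpa using hx))
    refine integral_comp_prodMk_eq_zero_of_indepFun (indepFun_eval_of_dependsOn hS hx')
      (g := fun q => centeredIndicator (μ x) (A q.1) q.2)
      hS.aemeasurable (measurable_pi_apply x).aemeasurable ?_ fun a => ?_
    · rw [hlaw]
      exact integrable_centeredIndicator_prod hA
    · rw [hlaw]
      exact integral_centeredIndicator (measurable_prodMk_left hA)
  · exact fun x _ => integrable_partialDisc_comp (T := {x}) hS hA |>.congr (by simp [partialDisc])

end PartialDisc

section JitterCube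

variable {m d : ℕ}

/-- The distribution of the sample point of the cube with index `x`. -/
def cubeMeasure (m d : ℕ) (x : Fin d → Fin m) : Measure (Fin d → ℝ) :=
  (m : ENNReal) ^ d • volume.restrict (jitterCube m d x)

lemma jitterMeasure_eq_pi : jitterMeasure m d = Measure.pi (cubeMeasure m d) := rfl

lemma measurableSet_jitterCube (x : Fin d → Fin m) : MeasurableSet (jitterCube m d x) :=
  .univ_pi fun _ => measurableSet_Ico

lemma measurableSet_anchoredBox (y : Fin d → ℝ) : MeasurableSet (anchoredBox d y) :=
  .univ_pi fun _ => measurableSet_Ico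

lemma cubeMeasure_univ_pi (x : Fin d → Fin m) (B : Fin d → Set ℝ) :
    cubeMeasure m d x (Set.univ.pi B) =
      ∏ i, m * volume (B i ∩ Set.Ico ((x i : ℝ) / m) ((x i : ℝ) / m + 1 / m)) := by
  rw [cubeMeasure, Measure.smul_apply, Measure.restrict_apply' (measurableSet_jitterCube x),
    jitterCube, ← Set.pi_inter_distrib, volume_pi_pi, Finset.prod_mul_distrib, Finset.prod_const,
    Finset.card_fin, smul_eq_mul]

lemma centeredIndicator_cubeMeasure_congr {x : Fin d → Fin m} {A B : Set (Fin d → ℝ)}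
    (h : ∀ p ∈ jitterCube m d x, p ∈ A ↔ p ∈ B) {p : Fin d → ℝ} (hp : p ∈ jitterCube m d x) :
    centeredIndicator (cubeMeasure m d x) A p = centeredIndicator (cubeMeasure m d x) B p := by
  have hAB : A ∩ jitterCube m d x = B ∩ jitterCube m d x :=
    Set.ext fun q => and_congr_left (h q)
  simp only [centeredIndicator, cubeMeasure, measureReal_def, Measure.smul_apply,
    Measure.restrict_apply' (measurableSet_jitterCube x), hAB,
    Set.indicator_eq_indicator (h p hp) rfl]

variable [NeZero m]

lemma mem_jitterCube_iff {x : Fin d → Fin m} {p : Fin d → ℝ} :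
    p ∈ jitterCube m d x ↔ ∀ i, ⌊(m : ℝ) * p i⌋ = (x i : ℤ) := by
  have hm : (0 : ℝ) < m := Nat.cast_pos.2 (NeZero.pos m)
  simp only [jitterCube, Set.mem_univ_pi, Set.mem_Ico, Int.floor_eq_iff, ← add_div,
    div_le_iff₀' hm, lt_div_iff₀' hm, Int.cast_natCast]

lemma pairwise_disjoint_jitterCube :
    Pairwise (Function.onFun Disjoint (jitterCube m d)) := fun x y hxy => by
  refine Set.disjoint_left.2 fun p hx hy => hxy (funext fun i => Fin.ext ?_)
  exact_mod_cast (mem_jitterCube_iff.1 hx i).symm.trans (mem_jitterCube_iff.1 hy i)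

lemma iUnion_jitterCube : ⋃ x, jitterCube m d x = anchoredBox d 1 := by
  have hm : (0 : ℝ) < m := Nat.cast_pos.2 (NeZero.pos m)
  have hfloor (t : ℝ) : (∃ k : Fin m, ⌊(m : ℝ) * t⌋ = (k : ℤ)) ↔ t ∈ Set.Ico 0 1 := by
    have hlt : ⌊(m : ℝ) * t⌋ < (m : ℤ) ↔ t < 1 := by
      rw [Int.floor_lt, Int.cast_natCast, mul_lt_iff_lt_one_right hm]
    rw [Set.mem_Ico, ← mul_nonneg_iff_of_pos_left hm, ← Int.floor_nonneg, ← hlt]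
    refine ⟨fun ⟨k, hk⟩ => by omega, fun ⟨h0, _⟩ => ⟨⟨⌊(m : ℝ) * t⌋.toNat, by omega⟩, ?_⟩⟩
    exact (Int.toNat_of_nonneg h0).symm
  ext p
  simp only [Set.mem_iUnion, mem_jitterCube_iff, anchoredBox, Set.mem_univ_pi, Pi.one_apply,
    ← hfloor]
  exact (Classical.skolem (p := fun i (k : Fin m) => ⌊(m : ℝ) * p i⌋ = (k : ℤ))).symm

lemma natCast_mul_volume_Ico (a : ℝ) : (m : ENNReal) * volume (Set.Ico a (a + 1 / m)) = 1 := by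
  have hm : (0 : ℝ) < m := Nat.cast_pos.2 (NeZero.pos m)
  rw [Real.volume_Ico, add_sub_cancel_left, ← ENNReal.ofReal_natCast,
    ← ENNReal.ofReal_mul hm.le, mul_one_div_cancel hm.ne', ENNReal.ofReal_one]

instance isProbabilityMeasure_cubeMeasure (x : Fin d → Fin m) :
    IsProbabilityMeasure (cubeMeasure m d x) where
  measure_univ := by
    rw [← Set.pi_univ Set.univ, cubeMeasure_univ_pi]
    simp only [Set.univ_inter, natCast_mul_volume_Ico, Finset.prod_const_one]

lemma cubeMeasure_eval_preimage (x : Fin d → Fin m) (i : Fin d) (B : Set ℝ) :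
    cubeMeasure m d x (Function.eval i ⁻¹' B) =
      m * volume (B ∩ Set.Ico ((x i : ℝ) / m) ((x i : ℝ) / m + 1 / m)) := by
  rw [← Set.univ_pi_update_univ, cubeMeasure_univ_pi, Finset.prod_eq_single i]
  · rw [Function.update_self]
  · intro j _ hj
    rw [Function.update_of_ne hj, Set.univ_inter, natCast_mul_volume_Ico]
  · simp

lemma ae_mem_jitterCube :
    ∀ᵐ P ∂(Measure.pi (cubeMeasure m d)), ∀ x, P x ∈ jitterCube m d x := by
  refine ae_all_iff.2 fun x => (Measure.tendsto_eval_ae_ae (i := x)).eventually ?_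
  exact (Measure.smul_absolutelyContinuous).ae_le (ae_restrict_mem (measurableSet_jitterCube x))

lemma sum_cubeMeasure_real {A : Set (Fin d → ℝ)} (hA : A ⊆ anchoredBox d 1) :
    ∑ x, (cubeMeasure m d x).real A = (m : ℝ) ^ d * (volume A).toReal := by
  have hvol : ∑ x, volume.restrict (jitterCube m d x) A = volume A := by
    rw [← tsum_fintype (L := .unconditional _), ← Measure.sum_apply_of_countable,
      ← Measure.restrict_iUnion pairwise_disjoint_jitterCube measurableSet_jitterCube,
      iUnion_jitterCube, Measure.restrict_eq_self _ hA]
  simp only [measureReal_def]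
  rw [← ENNReal.toReal_sum fun x _ => measure_ne_top _ _]
  simp only [cubeMeasure, Measure.smul_apply, smul_eq_mul, ← Finset.mul_sum, hvol,
    ENNReal.toReal_mul, ENNReal.toReal_pow, ENNReal.toReal_natCast]

lemma jdisc_eq_partialDisc {A : Set (Fin d → ℝ)} (hA : A ⊆ anchoredBox d 1)
    (P : (Fin d → Fin m) → (Fin d → ℝ)) :
    jdisc m d P A = partialDisc (cubeMeasure m d) Finset.univ A P := by
  classical
  simp only [jdisc, partialDisc, centeredIndicator, Finset.sum_sub_distrib,
    sum_cubeMeasure_real hA, Set.indicator_apply, Pi.one_apply, Finset.sum_boole]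

end JitterCube

section StarDisc

open Filter Topology

variable {m d : ℕ}

lemma anchoredBox_mono {y z : Fin d → ℝ} (h : y ≤ z) : anchoredBox d y ⊆ anchoredBox d z :=
  Set.pi_mono fun i _ => Set.Ico_subset_Ico_right (h i)

lemma anchoredBox_subset_unit {y : Fin d → ℝ} (hy : ∀ i, y i ∈ Set.Ico (0 : ℝ) 1) :
    anchoredBox d y ⊆ anchoredBox d 1 :=
  anchoredBox_mono fun i => (hy i).2.le

lemma volume_anchoredBox_toReal {y : Fin d → ℝ} (hy : 0 ≤ y) :
    (volume (anchoredBox d y)).toReal = ∏ i, y i := by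
  simpa [anchoredBox] using Real.volume_pi_Ico_toReal hy

lemma abs_jdisc_le {A : Set (Fin d → ℝ)} (hA : A ⊆ anchoredBox d 1)
    (P : (Fin d → Fin m) → (Fin d → ℝ)) : |jdisc m d P A| ≤ (m : ℝ) ^ d := by
  have hvol : volume (anchoredBox d 1) = 1 := by simp [anchoredBox, volume_pi_pi]
  have hA1 : (volume A).toReal ≤ 1 :=
    ENNReal.toReal_mono ENNReal.one_ne_top (hvol ▸ measure_mono hA)
  refine abs_sub_le_of_nonneg_of_le (Nat.cast_nonneg _) ?_ (by positivity)
    (mul_le_of_le_one_right (by positivity) hA1)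
  exact_mod_cast (Finset.card_le_univ _).trans_eq (by simp)

lemma abs_jdisc_le_starDisc {y : Fin d → ℝ} (hy : ∀ i, y i ∈ Set.Ico (0 : ℝ) 1)
    (P : (Fin d → Fin m) → (Fin d → ℝ)) : |jdisc m d P (anchoredBox d y)| ≤ starDisc m d P :=
  le_ciSup (f := fun y : {y : Fin d → ℝ // ∀ i, y i ∈ Set.Ico (0 : ℝ) 1} =>
      |jdisc m d P (anchoredBox d y.1)|)
    ⟨(m : ℝ) ^ d, by rintro _ ⟨z, rfl⟩; exact abs_jdisc_le (anchoredBox_subset_unit z.2) P⟩ ⟨y, hy⟩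

lemma abs_starDisc_le (P : (Fin d → Fin m) → (Fin d → ℝ)) : |starDisc m d P| ≤ (m : ℝ) ^ d := by
  have h0 : 0 ≤ starDisc m d P := Real.iSup_nonneg fun _ => abs_nonneg _
  rw [abs_of_nonneg h0]
  exact Real.iSup_le (fun y => abs_jdisc_le (anchoredBox_subset_unit y.2) P) (by positivity)

/- Only convergence from below works: the boxes do not contain their upper faces. -/
lemma tendsto_jdisc_anchoredBox {q : ℕ → Fin d → ℝ} {y : Fin d → ℝ} (hq0 : ∀ n, 0 ≤ q n)
    (hqy : ∀ n, q n ≤ y) (hq : Tendsto q atTop (𝓝 y)) (P : (Fin d → Fin m) → (Fin d → ℝ)) :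
    Tendsto (fun n => jdisc m d P (anchoredBox d (q n))) atTop
      (𝓝 (jdisc m d P (anchoredBox d y))) := by
  have hlim := tendsto_pi_nhds.1 hq
  have hmem (x : Fin d → Fin m) :
      ∀ᶠ n in atTop, P x ∈ anchoredBox d (q n) ↔ P x ∈ anchoredBox d y := by
    by_cases hx : P x ∈ anchoredBox d y
    · filter_upwards [eventually_all.2 fun i =>
        (hlim i).eventually_const_lt (hx i (Set.mem_univ i)).2] with n hn
      exact iff_of_true (fun i hi => ⟨(hx i hi).1, hn i⟩) hx
    · exact .of_forall fun n => iff_of_false (fun h => hx (anchoredBox_mono (hqy n) h)) hx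
  have hvol : Tendsto (fun n => (volume (anchoredBox d (q n))).toReal) atTop
      (𝓝 (volume (anchoredBox d y)).toReal) := by
    simp only [volume_anchoredBox_toReal (hq0 _),
      volume_anchoredBox_toReal ((hq0 0).trans (hqy 0))]
    exact tendsto_finsetProd _ fun i _ => hlim i
  refine Tendsto.congr' ?_ (tendsto_const_nhds.sub (hvol.const_mul _))
  filter_upwards [eventually_all.2 hmem] with n hn
  unfold jdisc
  congr 3 with x
  simp only [Finset.mem_filter_univ, hn]

lemma exists_seq_rat_nonneg_le_tendsto {y : ℝ} (hy : 0 ≤ y) :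
    ∃ q : ℕ → ℚ, (∀ n, 0 ≤ (q n : ℝ)) ∧ (∀ n, (q n : ℝ) ≤ y) ∧
      Tendsto (fun n => (q n : ℝ)) atTop (𝓝 y) := by
  obtain ⟨u, -, huy, hu⟩ := Real.exists_seq_rat_strictMono_tendsto y
  refine ⟨fun n => max 0 (u n), fun n => ?_, fun n => ?_, ?_⟩
  · exact_mod_cast le_max_left _ _
  · simpa using ⟨hy, (huy n).le⟩
  · simpa [hy] using (tendsto_const_nhds (x := (0 : ℝ))).max hu

lemma starDisc_eq_iSup_rat (P : (Fin d → Fin m) → (Fin d → ℝ)) :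
    starDisc m d P = ⨆ q : {q : Fin d → ℚ // ∀ i, (q i : ℝ) ∈ Set.Ico (0 : ℝ) 1},
      |jdisc m d P (anchoredBox d fun i => (q.1 i : ℝ))| := by
  apply le_antisymm
  · refine Real.iSup_le (fun ⟨y, hy⟩ => ?_) (Real.iSup_nonneg fun _ => abs_nonneg _)
    choose q hq0 hqy hq using fun i => exists_seq_rat_nonneg_le_tendsto (hy i).1
    refine le_of_tendsto' (tendsto_jdisc_anchoredBox (q := fun n i => q i n)
      (fun n i => hq0 i n) (fun n i => hqy i n) (tendsto_pi_nhds.2 hq) P).abs fun n => ?_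
    refine le_ciSup (f := fun q : {q : Fin d → ℚ // ∀ i, (q i : ℝ) ∈ Set.Ico (0 : ℝ) 1} =>
      |jdisc m d P (anchoredBox d fun i => (q.1 i : ℝ))|) ⟨starDisc m d P, ?_⟩
      ⟨fun i => q i n, fun i => ⟨hq0 i n, (hqy i n).trans_lt (hy i).2⟩⟩
    rintro _ ⟨q, rfl⟩
    exact abs_jdisc_le_starDisc q.2 P
  · exact Real.iSup_le (fun q => abs_jdisc_le_starDisc q.2 P)
      (Real.iSup_nonneg fun _ => abs_nonneg _)

variable [NeZero m]

lemma measurable_jdisc {A : Set (Fin d → ℝ)} (hA : MeasurableSet A)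
    (hsub : A ⊆ anchoredBox d 1) :
    Measurable fun P : (Fin d → Fin m) → (Fin d → ℝ) => jdisc m d P A := by
  simp only [jdisc_eq_partialDisc hsub]
  exact measurable_partialDisc hA

lemma measurable_starDisc : Measurable (starDisc m d) := by
  rw [funext starDisc_eq_iSup_rat]
  exact .iSup fun q =>
    (measurable_jdisc (measurableSet_anchoredBox _) (anchoredBox_subset_unit q.2)).abs

lemma integrable_starDisc : Integrable (starDisc m d) (Measure.pi (cubeMeasure m d)) :=
  .of_bound measurable_starDisc.aestronglyMeasurable ((m : ℝ) ^ d) (.of_forall abs_starDisc_le)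

end StarDisc

section AdaptiveCorner

variable {m d : ℕ}

open scoped Classical in
/-- The corner of `adaptiveBox`: it lies one side length of a cube away from the facets of the unit
cube, but only half a side length in the directions `i ∈ S`. -/
def adaptiveCorner (m d : ℕ) (S : Set (Fin d)) (i : Fin d) : ℝ :=
  if i ∈ S then 1 - 1 / (2 * m) else 1 - 1 / m

/-- The anchored box that witnesses the lower bound, when `S` is the set of directions in which
pushing out the box increases its discrepancy. -/
def adaptiveBox (m d : ℕ) (S : Set (Fin d)) : Set (Fin d → ℝ) :=
  anchoredBox d (adaptiveCorner m d S)

/-- The indices of the cubes that touch the facet `p i = 1` of the unit cube and no other facet of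
the form `p j = 1`. -/
def facetCubes (m d : ℕ) (i : Fin d) : Finset (Fin d → Fin m) :=
  Fintype.piFinset fun j => {k | (k : ℕ) + 1 = m ↔ j = i}

/-- The indices of the cubes outside all the `facetCubes m d i`. The points in these cubes do not
influence the choice of the witness box. -/
def nonFacetCubes (m d : ℕ) : Finset (Fin d → Fin m) :=
  (Finset.univ.biUnion (facetCubes m d))ᶜ

/-- The points below the hyperplane that halves the cubes of `facetCubes m d i`. -/
def lowerHalf (m d : ℕ) (i : Fin d) : Set (Fin d → ℝ) :=
  Function.eval i ⁻¹' Set.Iio (1 - 1 / (2 * m))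

/-- The discrepancy of the lower halves of the cubes of `facetCubes m d i`. -/
def facetDisc (m d : ℕ) (i : Fin d) (P : (Fin d → Fin m) → (Fin d → ℝ)) : ℝ :=
  partialDisc (cubeMeasure m d) (facetCubes m d i) (lowerHalf m d i) P

/-- The directions in which pushing the box out increases its discrepancy. -/
def positiveFacets (m d : ℕ) (P : (Fin d → Fin m) → (Fin d → ℝ)) : Set (Fin d) :=
  {i | 0 < facetDisc m d i P}

lemma mem_facetCubes {i : Fin d} {x : Fin d → Fin m} :
    x ∈ facetCubes m d i ↔ ∀ j, (x j : ℕ) + 1 = m ↔ j = i := by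
  simp [facetCubes]

lemma measurableSet_lowerHalf (i : Fin d) : MeasurableSet (lowerHalf m d i) :=
  measurable_pi_apply i measurableSet_Iio

lemma pairwise_disjoint_facetCubes (s : Set (Fin d)) : s.PairwiseDisjoint (facetCubes m d) :=
  fun i _ _ _ hij => Finset.disjoint_left.2 fun _ hi hj =>
    hij ((mem_facetCubes.1 hj i).1 ((mem_facetCubes.1 hi i).2 rfl))

lemma measurable_facetDisc (i : Fin d) : Measurable (facetDisc m d i) :=
  measurable_partialDisc (measurableSet_lowerHalf i)

lemma measurable_positiveFacets : Measurable (positiveFacets m d) :=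
  measurable_set_iff.2 fun i =>
    measurableSet_setOfPred.1 (measurableSet_lt measurable_const (measurable_facetDisc i))

lemma dependsOn_positiveFacets :
    DependsOn (positiveFacets m d) (nonFacetCubes m d : Set (Fin d → Fin m))ᶜ := fun P Q h => by
  have hdisc (i : Fin d) : facetDisc m d i P = facetDisc m d i Q :=
    dependsOn_partialDisc fun x hx => h x (by simpa [nonFacetCubes] using ⟨i, hx⟩)
  simp only [positiveFacets, hdisc]

lemma measurableSet_adaptiveBox_prod :
    MeasurableSet {q : Set (Fin d) × (Fin d → ℝ) | q.2 ∈ adaptiveBox m d q.1} :=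
  measurableSet_setOfPred.2 <| measurable_from_prod_countable_right fun S =>
    measurableSet_setOfPred.1 (measurableSet_anchoredBox (adaptiveCorner m d S))

variable [NeZero m]

lemma card_facetCubes (i : Fin d) : (facetCubes m d i).card = (m - 1) ^ (d - 1) := by
  have hlast : ({k : Fin m | (k : ℕ) + 1 = m} : Finset (Fin m)).card = 1 :=
    Finset.card_eq_one.2 ⟨⟨m - 1, by have := NeZero.pos m; omega⟩, by
      ext k
      simp only [Finset.mem_filter_univ, Finset.mem_singleton, Fin.ext_iff]
      omega⟩
  have hnot : ({k : Fin m | ¬(k : ℕ) + 1 = m} : Finset (Fin m)).card = m - 1 := by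
    have hsplit := Finset.card_filter_add_card_filter_not (s := Finset.univ)
      fun k : Fin m => (k : ℕ) + 1 = m
    rw [hlast, Finset.card_fin] at hsplit
    omega
  have hprod (j : Fin d) : ({k : Fin m | (k : ℕ) + 1 = m ↔ j = i} : Finset (Fin m)).card =
      if j = i then 1 else m - 1 := by
    split_ifs with hj
    · simpa only [hj, iff_true] using hlast
    · simpa only [hj, iff_false] using hnot
  rw [facetCubes, Fintype.card_piFinset]
  simp only [hprod]
  rw [Finset.prod_ite, Finset.prod_const_one, one_mul, Finset.prod_const, Finset.filter_ne',
    Finset.card_erase_of_mem (Finset.mem_univ i), Finset.card_fin]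

lemma one_sub_one_div_le_iff_of_mem_jitterCube {x : Fin d → Fin m} {p : Fin d → ℝ}
    (hp : p ∈ jitterCube m d x) (j : Fin d) : 1 - 1 / (m : ℝ) ≤ p j ↔ (x j : ℕ) + 1 = m := by
  have hm : (0 : ℝ) < m := Nat.cast_pos.2 (NeZero.pos m)
  have hfloor : ((m : ℤ) - 1 ≤ ⌊(m : ℝ) * p j⌋) ↔ 1 - 1 / (m : ℝ) ≤ p j := by
    rw [Int.le_floor, ← mul_le_mul_iff_right₀ hm (b := 1 - 1 / (m : ℝ)), mul_sub,
      mul_one_div_cancel hm.ne', mul_one]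
    push_cast
    rfl
  rw [← hfloor, mem_jitterCube_iff.1 hp j]
  omega

lemma mem_adaptiveBox_iff_of_mem_facetCubes {i : Fin d} {x : Fin d → Fin m}
    (hx : x ∈ facetCubes m d i) {p : Fin d → ℝ} (hp : p ∈ jitterCube m d x) (S : Set (Fin d)) :
    p ∈ adaptiveBox m d S ↔ i ∈ S ∧ p ∈ lowerHalf m d i := by
  have hm : (0 : ℝ) < m := Nat.cast_pos.2 (NeZero.pos m)
  have hle (j : Fin d) : 1 - 1 / (m : ℝ) ≤ adaptiveCorner m d S j := by
    have : 1 / (2 * (m : ℝ)) ≤ 1 / m := by gcongr; linarith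
    unfold adaptiveCorner
    split_ifs <;> linarith
  have hface (j : Fin d) : 1 - 1 / (m : ℝ) ≤ p j ↔ j = i :=
    (one_sub_one_div_le_iff_of_mem_jitterCube hp j).trans (mem_facetCubes.1 hx j)
  have hnonneg (j : Fin d) : 0 ≤ p j := (by positivity : (0 : ℝ) ≤ x j / m).trans (hp j trivial).1
  have hcorner : p ∈ adaptiveBox m d S ↔ p i < adaptiveCorner m d S i := by
    refine ⟨fun h => (h i trivial).2, fun h j _ => ⟨hnonneg j, ?_⟩⟩
    rcases eq_or_ne j i with rfl | hj
    · exact h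
    · exact (not_le.1 (mt (hface j).1 hj)).trans_le (hle j)
  rw [hcorner, adaptiveCorner]
  split_ifs with hi
  · simp [hi, lowerHalf]
  · simpa only [hi, false_and, iff_false, not_lt] using (hface i).2 rfl

lemma cubeMeasure_real_lowerHalf {i : Fin d} {x : Fin d → Fin m} (hx : x ∈ facetCubes m d i) :
    (cubeMeasure m d x).real (lowerHalf m d i) = 1 / 2 := by
  have hm : (0 : ℝ) < m := Nat.cast_pos.2 (NeZero.pos m)
  have hxi : (x i : ℝ) = m - 1 := by
    rw [eq_sub_iff_add_eq]
    exact_mod_cast (mem_facetCubes.1 hx i).2 rfl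
  have hmin : min (((m : ℝ) - 1) / m + 1 / m) (1 - 1 / (2 * m)) = 1 - 1 / (2 * m) := by
    rw [← add_div, sub_add_cancel, div_self hm.ne']
    exact min_eq_right (sub_le_self _ (by positivity))
  rw [measureReal_def, lowerHalf, cubeMeasure_eval_preimage, hxi, Set.inter_comm,
    Set.Ico_inter_Iio, hmin, Real.volume_Ico, ← ENNReal.ofReal_natCast,
    ← ENNReal.ofReal_mul hm.le, ENNReal.toReal_ofReal]
  · field_simp
    ring
  · field_simp
    linarith

lemma adaptiveCorner_mem_Ico (S : Set (Fin d)) (i : Fin d) :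
    adaptiveCorner m d S i ∈ Set.Ico (0 : ℝ) 1 := by
  have hm : (1 : ℝ) ≤ m := Nat.one_le_cast.2 (NeZero.pos m)
  have h1 : 1 / (m : ℝ) ≤ 1 := div_le_one_of_le₀ hm (by positivity)
  have h2 : 1 / (2 * (m : ℝ)) ≤ 1 := div_le_one_of_le₀ (by linarith) (by positivity)
  have h3 : 0 < 1 / (m : ℝ) := by positivity
  have h4 : 0 < 1 / (2 * (m : ℝ)) := by positivity
  unfold adaptiveCorner
  split_ifs <;> constructor <;> linarith

lemma partialDisc_facetCubes_adaptiveBox {P : (Fin d → Fin m) → (Fin d → ℝ)}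
    (hP : ∀ x, P x ∈ jitterCube m d x) (i : Fin d) :
    partialDisc (cubeMeasure m d) (facetCubes m d i) (adaptiveBox m d (positiveFacets m d P)) P =
      (facetDisc m d i P)⁺ := by
  by_cases hi : i ∈ positiveFacets m d P
  · rw [posPart_of_nonneg (Set.mem_ofPred.1 hi).le]
    refine Finset.sum_congr rfl fun x hx => ?_
    exact centeredIndicator_cubeMeasure_congr (fun p hp => by
      simp [mem_adaptiveBox_iff_of_mem_facetCubes hx hp, hi]) (hP x)
  · rw [posPart_of_nonpos (not_lt.1 hi)]
    refine Finset.sum_eq_zero fun x hx => ?_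
    rw [centeredIndicator_cubeMeasure_congr (B := ∅) (fun p hp => by
      simp [mem_adaptiveBox_iff_of_mem_facetCubes hx hp, hi]) (hP x), centeredIndicator_empty]

lemma sum_posPart_facetDisc_add_le_starDisc {P : (Fin d → Fin m) → (Fin d → ℝ)}
    (hP : ∀ x, P x ∈ jitterCube m d x) :
    ∑ i, (facetDisc m d i P)⁺ + partialDisc (cubeMeasure m d) (nonFacetCubes m d)
      (adaptiveBox m d (positiveFacets m d P)) P ≤ starDisc m d P := by
  have hcorner := adaptiveCorner_mem_Ico (m := m) (positiveFacets m d P)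
  rw [Finset.sum_congr rfl fun i _ => (partialDisc_facetCubes_adaptiveBox hP i).symm,
    ← partialDisc_biUnion (pairwise_disjoint_facetCubes _), nonFacetCubes, partialDisc_add_compl,
    adaptiveBox, ← jdisc_eq_partialDisc (anchoredBox_subset_unit hcorner)]
  exact (le_abs_self _).trans (abs_jdisc_le_starDisc hcorner P)

lemma mul_sqrt_le_integral_posPart_facetDisc (i : Fin d) :
    khintchineConst / 4 * √(((m - 1 : ℕ) : ℝ) ^ (d - 1)) ≤
      ∫ P, (facetDisc m d i P)⁺ ∂(Measure.pi (cubeMeasure m d)) := by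
  rw [← Nat.cast_pow, ← card_facetCubes i]
  exact mul_sqrt_card_le_integral_posPart_partialDisc (measurableSet_lowerHalf i)
    fun x hx => cubeMeasure_real_lowerHalf hx

theorem mul_sqrt_le_expStarDisc :
    d * (khintchineConst / 4 * √(((m - 1 : ℕ) : ℝ) ^ (d - 1))) ≤ expStarDisc m d := by
  rw [expStarDisc, jitterMeasure_eq_pi]
  have hint (i : Fin d) :
      Integrable (fun P => (facetDisc m d i P)⁺) (Measure.pi (cubeMeasure m d)) :=
    (integrable_partialDisc (measurableSet_lowerHalf i)).pos_part
  have hrest_int := integrable_partialDisc_comp (μ := cubeMeasure m d) (T := nonFacetCubes m d)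
    measurable_positiveFacets (measurableSet_adaptiveBox_prod (m := m))
  have hrest := integral_partialDisc_comp_of_dependsOn (μ := cubeMeasure m d)
    measurable_positiveFacets dependsOn_positiveFacets (measurableSet_adaptiveBox_prod (m := m))
  calc d * (khintchineConst / 4 * √(((m - 1 : ℕ) : ℝ) ^ (d - 1)))
      = ∑ _i : Fin d, khintchineConst / 4 * √(((m - 1 : ℕ) : ℝ) ^ (d - 1)) := by simp
    _ ≤ ∑ i, ∫ P, (facetDisc m d i P)⁺ ∂(Measure.pi (cubeMeasure m d)) :=
        Finset.sum_le_sum fun i _ => mul_sqrt_le_integral_posPart_facetDisc i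
    _ = ∫ P, (∑ i, (facetDisc m d i P)⁺ + partialDisc (cubeMeasure m d) (nonFacetCubes m d)
          (adaptiveBox m d (positiveFacets m d P)) P) ∂(Measure.pi (cubeMeasure m d)) := by
        rw [integral_add (integrable_finsetSum _ fun i _ => hint i) hrest_int, hrest, add_zero,
          integral_finsetSum _ fun i _ => hint i]
    _ ≤ ∫ P, starDisc m d P ∂(Measure.pi (cubeMeasure m d)) :=
        integral_mono_ae ((integrable_finsetSum _ fun i _ => hint i).add hrest_int)
          integrable_starDisc
          (ae_mem_jitterCube.mono fun P hP => sum_posPart_facetDisc_add_le_starDisc hP)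

end AdaptiveCorner

lemma pow_le_exp_mul_sub_one_pow {a : ℝ} (ha : 1 < a) (n : ℕ) :
    a ^ n ≤ Real.exp (n / (a - 1)) * (a - 1) ^ n := by
  have ha' : 0 < a - 1 := sub_pos.2 ha
  have hstep : a ≤ Real.exp (1 / (a - 1)) * (a - 1) :=
    calc a = (1 / (a - 1) + 1) * (a - 1) := by field_simp; ring
      _ ≤ Real.exp (1 / (a - 1)) * (a - 1) := by gcongr; exact Real.add_one_le_exp _
  calc a ^ n ≤ (Real.exp (1 / (a - 1)) * (a - 1)) ^ n := by gcongr
    _ = Real.exp (n / (a - 1)) * (a - 1) ^ n := by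
        rw [mul_pow, ← Real.exp_nat_mul, mul_one_div]

lemma sqrt_mul_pow_le_of_bounded_ratio {γ Γ : ℝ} (hγ : 0 < γ) {m d : ℕ} (hm : 2 ≤ m)
    (hγm : γ * d ≤ m) (hmΓ : m ≤ Γ * d) :
    √((d : ℝ) * (m : ℝ) ^ d) ≤
      √(Γ * Real.exp (2 / γ)) * (d * √(((m - 1 : ℕ) : ℝ) ^ (d - 1))) := by
  have hm2 : (2 : ℝ) ≤ m := by exact_mod_cast hm
  have hΓd : 0 < Γ * d := by linarith
  have hΓ : 0 < Γ := pos_of_mul_pos_left hΓd (Nat.cast_nonneg d)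
  have hd : d ≠ 0 := Nat.cast_ne_zero.1 (right_ne_zero_of_mul hΓd.ne')
  have hcast : ((m - 1 : ℕ) : ℝ) = m - 1 := by rw [Nat.cast_sub (by omega), Nat.cast_one]
  have hratio : ((d - 1 : ℕ) : ℝ) / (m - 1) ≤ 2 / γ := by
    rw [div_le_div_iff₀ (by linarith) hγ]
    calc ((d - 1 : ℕ) : ℝ) * γ ≤ d * γ := by gcongr; exact Nat.sub_le d 1
      _ ≤ 2 * (m - 1) := by linarith
  have hpow : (m : ℝ) ^ (d - 1) ≤ Real.exp (2 / γ) * ((m - 1 : ℕ) : ℝ) ^ (d - 1) := by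
    refine (pow_le_exp_mul_sub_one_pow (by linarith) (d - 1)).trans ?_
    rw [hcast]
    have : (0 : ℝ) ≤ m - 1 := by linarith
    gcongr
  rw [← Real.sqrt_sq (Nat.cast_nonneg (α := ℝ) d), ← Real.sqrt_mul (by positivity),
    ← Real.sqrt_mul (by positivity), Real.sqrt_sq (Nat.cast_nonneg d)]
  refine Real.sqrt_le_sqrt ?_
  calc (d : ℝ) * (m : ℝ) ^ d = d * (m * (m : ℝ) ^ (d - 1)) := by rw [mul_pow_sub_one hd]
    _ ≤ d * (Γ * d * (Real.exp (2 / γ) * ((m - 1 : ℕ) : ℝ) ^ (d - 1))) := by gcongr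
    _ = Γ * Real.exp (2 / γ) * (d ^ 2 * ((m - 1 : ℕ) : ℝ) ^ (d - 1)) := by ring

/-- For all constants `Γ ≥ γ > 0` there is a constant `C' > 0` (depending only on `γ` and `Γ`)
such that for all integers `m, d ≥ 2` with `γ·d ≤ m ≤ Γ·d`, a jittered sampling point set of
`N = m^d` points in `[0,1)^d` satisfies `E[D*(P)] ≥ C'·√(d·N)`. -/
theorem jittered_sampling_lower_bound_bounded_ratio (γ Γ : ℝ) (hγ : 0 < γ) (hγΓ : γ ≤ Γ) :
    ∃ C' : ℝ, 0 < C' ∧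
      ∀ m d : ℕ, 2 ≤ m → 2 ≤ d → γ * d ≤ m → (m : ℝ) ≤ Γ * d →
        C' * Real.sqrt ((d : ℝ) * (m : ℝ) ^ d) ≤ expStarDisc m d := by
  have hΓ : 0 < Γ := hγ.trans_le hγΓ
  have hκ := khintchineConst_pos
  refine ⟨khintchineConst / 4 / √(Γ * Real.exp (2 / γ)), by positivity,
    fun m d hm hd hγm hmΓ => ?_⟩
  have : NeZero m := ⟨by omega⟩
  calc khintchineConst / 4 / √(Γ * Real.exp (2 / γ)) * √(d * (m : ℝ) ^ d)
      ≤ khintchineConst / 4 / √(Γ * Real.exp (2 / γ)) *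
          (√(Γ * Real.exp (2 / γ)) * (d * √(((m - 1 : ℕ) : ℝ) ^ (d - 1)))) :=
        mul_le_mul_of_nonneg_left (sqrt_mul_pow_le_of_bounded_ratio hγ hm hγm hmΓ) (by positivity)
    _ = d * (khintchineConst / 4 * √(((m - 1 : ℕ) : ℝ) ^ (d - 1))) := by field_simp
    _ ≤ expStarDisc m d := mul_sqrt_le_expStarDisc
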